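/- arXiv:1912.00992 — 5 statements merged into one kernel-verified Lean document; each statement's English description precedes it below -/
import Mathlib

section
/- Let X be a nonnegative real random variable whose law has a density f with respect to Lebesgue measure, where f is non-increasing on [0, ∞). Then for all real numbers x, y with 0 ≤ x < y one has P(x ≤ X ≤ y) ≤ ((y − x)/y) · P(X ≤ y); equivalently, the conditional probability P(X ≥ x | X ≤ y) is at most (y − x)/y. -/
open MeasureTheory
open scoped ENNReal

/-!
If every value of `f` on `s` is at most every value of `f` on a disjoint set `t`, then the mean of
`f` over `s` is at most its mean over `s ∪ t`: the constant `c = sup_s f` separates the two sets of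
values, so `∫_s f ≤ c μ(s)` and `c μ(t) ≤ ∫_t f`. For an antitone density take `s = [x, b]` and
`t = [a, x)`. Cross-multiplied, the inequalities need no finiteness.
-/

section SetLIntegral

variable {α : Type*} [MeasurableSpace α] {μ : Measure α} {f : α → ℝ≥0∞}

theorem measure_mul_setLIntegral_le_of_forall_le {s t : Set α} (ht : MeasurableSet t)
    (hst : ∀ a ∈ s, ∀ b ∈ t, f a ≤ f b) :
    μ t * ∫⁻ a in s, f a ∂μ ≤ μ s * ∫⁻ a in t, f a ∂μ := by
  set c := ⨆ a ∈ s, f a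
  have lintegral_le : ∫⁻ a in s, f a ∂μ ≤ c * μ s := by
    rw [← setLIntegral_const]
    exact setLIntegral_mono measurable_const fun a ha ↦ le_iSup₂ (f := fun a _ ↦ f a) a ha
  have le_lintegral : c * μ t ≤ ∫⁻ a in t, f a ∂μ := by
    rw [← setLIntegral_const]
    exact setLIntegral_mono' ht fun b hb ↦ iSup₂_le fun a ha ↦ hst a ha b hb
  calc μ t * ∫⁻ a in s, f a ∂μ
      ≤ μ t * (c * μ s) := by gcongr
    _ = μ s * (c * μ t) := by ring
    _ ≤ μ s * ∫⁻ a in t, f a ∂μ := by gcongr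

theorem measure_union_mul_setLIntegral_le_of_forall_le {s t : Set α} (ht : MeasurableSet t)
    (hd : Disjoint s t) (hst : ∀ a ∈ s, ∀ b ∈ t, f a ≤ f b) :
    μ (s ∪ t) * ∫⁻ a in s, f a ∂μ ≤ μ s * ∫⁻ a in s ∪ t, f a ∂μ := by
  rw [measure_union hd ht, lintegral_union ht hd, add_mul, mul_add]
  exact add_le_add le_rfl (measure_mul_setLIntegral_le_of_forall_le ht hst)

theorem measure_Icc_mul_setLIntegral_Icc_le_of_antitoneOn [LinearOrder α] [TopologicalSpace α]
    [OrderClosedTopology α] [OpensMeasurableSpace α] {a x b : α} (hf : AntitoneOn f (Set.Icc a b))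
    (hax : a ≤ x) (hxb : x ≤ b) :
    μ (Set.Icc a b) * ∫⁻ t in Set.Icc x b, f t ∂μ ≤
      μ (Set.Icc x b) * ∫⁻ t in Set.Icc a b, f t ∂μ := by
  have union_eq : Set.Icc x b ∪ Set.Ico a x = Set.Icc a b := by
    rw [Set.union_comm, Set.Ico_union_Icc_eq_Icc hax hxb]
  rw [← union_eq]
  refine measure_union_mul_setLIntegral_le_of_forall_le measurableSet_Ico ?_ ?_
  · exact Set.disjoint_left.2 fun t ht ht' ↦ ht'.2.not_ge ht.1
  · intro u hu v hv
    exact hf ⟨hv.1, hv.2.le.trans hxb⟩ ⟨hax.trans hu.1, hu.2⟩ (hv.2.le.trans hu.1)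

end SetLIntegral

theorem stmt_0_general {Ω : Type*} [MeasurableSpace Ω] {P : Measure Ω} {X : Ω → ℝ}
    (hX : AEMeasurable X P) {f : ℝ → ℝ≥0∞} (hlaw : P.map X = volume.withDensity f)
    {a x b : ℝ} (hf : AntitoneOn f (Set.Icc a b)) (hax : a ≤ x) (hxb : x < b) :
    P (X ⁻¹' Set.Icc x b) ≤ ENNReal.ofReal ((b - x) / (b - a)) * P (X ⁻¹' Set.Icc a b) := by
  have measure_preimage (u : ℝ) : P (X ⁻¹' Set.Icc u b) = ∫⁻ t in Set.Icc u b, f t := by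
    rw [← Measure.map_apply_of_aemeasurable hX measurableSet_Icc, hlaw,
      withDensity_apply _ measurableSet_Icc]
  have hab : 0 < b - a := sub_pos.2 (hax.trans_lt hxb)
  have cross_mul := measure_Icc_mul_setLIntegral_Icc_le_of_antitoneOn (μ := volume) hf hax hxb.le
  rw [Real.volume_Icc, Real.volume_Icc, ← measure_preimage, ← measure_preimage] at cross_mul
  rw [ENNReal.ofReal_div_of_pos hab, ← ENNReal.mul_div_right_comm]
  refine (ENNReal.le_div_iff_mul_le (.inl ?_) (.inl ENNReal.ofReal_ne_top)).2 ?_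
  · exact (ENNReal.ofReal_pos.2 hab).ne'
  · rwa [mul_comm]

/-- Let `X` be a nonnegative real random variable whose law has a density `f`
with respect to Lebesgue measure, where `f` is non-increasing on `[0, ∞)` (and vanishes on
`(-∞, 0)`). Then for all reals `0 ≤ x < y`,
`P(x ≤ X ≤ y) ≤ ((y - x)/y) · P(X ≤ y)`. -/
theorem stmt_0 {Ω : Type*} [MeasurableSpace Ω] (P : Measure Ω) [IsProbabilityMeasure P]
    (X : Ω → ℝ) (hX : Measurable X) (f : ℝ → ℝ≥0∞) (hf : Measurable f)
    (hlaw : P.map X = volume.withDensity f)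
    (hXnn : ∀ᵐ ω ∂P, 0 ≤ X ω)
    (hf_mono : ∀ a b : ℝ, 0 ≤ a → a ≤ b → f b ≤ f a)
    (hf_neg : ∀ x : ℝ, x < 0 → f x = 0)
    (x y : ℝ) (hx : 0 ≤ x) (hxy : x < y) :
    P {ω | x ≤ X ω ∧ X ω ≤ y} ≤ ENNReal.ofReal ((y - x) / y) * P {ω | X ω ≤ y} := by
  have antitoneOn : AntitoneOn f (Set.Icc 0 y) := fun a ha b _ hab ↦ hf_mono a b ha.1 hab
  calc P (X ⁻¹' Set.Icc x y)
      ≤ ENNReal.ofReal ((y - x) / y) * P (X ⁻¹' Set.Icc 0 y) := by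
        simpa only [sub_zero] using stmt_0_general hX.aemeasurable hlaw antitoneOn hx hxy
    _ ≤ ENNReal.ofReal ((y - x) / y) * P {ω | X ω ≤ y} := by
        gcongr
        exact fun ω hω ↦ hω.2
end

section
/- Fix r > 0, m ∈ ℝ and σ > 0, and let X be a real random variable with the Gaussian distribution N(m, σ²). Then the function s ↦ P(X ≥ s + r | X ≥ s) is strictly decreasing on ℝ; equivalently, for all real numbers s₁ < s₂ one has P(X ≥ s₂ + r) · P(X ≥ s₁) < P(X ≥ s₁ + r) · P(X ≥ s₂). -/
open MeasureTheory ProbabilityTheory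
open scoped ENNReal

/-!
Put `μ = N(m, σ²)` and `ν = N(m - r, σ²)`, the law of `X - r`. Then `X ≥ s` and `X ≥ s + r` have
probabilities `μ [s, ∞)` and `ν [s, ∞)`. The density of `ν` with respect to `μ` is an exponential
tilt with negative slope `-r / σ²`, hence strictly decreasing. So its `μ`-average over `[s₂, ∞)`,
which is `ν [s₂, ∞) / μ [s₂, ∞)`, is at most its value at `s₂`, while its average over `[s₁, s₂)`
exceeds that value. Adjoining `[s₁, s₂)` to `[s₂, ∞)` therefore strictly increases the quotient.
-/

section MonotoneLikelihoodRatio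

open Set

variable {α : Type*} [LinearOrder α] [TopologicalSpace α] [OrderClosedTopology α]
  [MeasurableSpace α] [OpensMeasurableSpace α] {μ : Measure α} {ρ : α → ℝ≥0∞} {a b : α}

lemma withDensity_Ici_le_of_antitone (hρ : Antitone ρ) :
    μ.withDensity ρ (Ici b) ≤ ρ b * μ (Ici b) := by
  rw [withDensity_apply _ measurableSet_Ici, ← setLIntegral_const]
  exact setLIntegral_mono' measurableSet_Ici fun _ hx => hρ hx

lemma mul_measure_Ico_lt_withDensity_Ico_of_strictAnti (hρ : StrictAnti ρ) (hρm : AEMeasurable ρ μ)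
    (h₀ : μ (Ico a b) ≠ 0) (h_top : μ (Ico a b) ≠ ∞) :
    ρ b * μ (Ico a b) < μ.withDensity ρ (Ico a b) := by
  obtain ⟨x, hx⟩ : (Ico a b).Nonempty := nonempty_of_measure_ne_zero h₀
  have hρb : ρ b ≠ ∞ := (hρ hx.2).ne_top
  rw [withDensity_apply _ measurableSet_Ico, ← setLIntegral_const]
  refine lintegral_strict_mono (Measure.restrict_eq_zero.not.mpr h₀) hρm.restrict ?_ ?_
  · rw [setLIntegral_const]
    exact ENNReal.mul_ne_top hρb h_top
  · exact ae_restrict_of_forall_mem measurableSet_Ico fun _ hy => hρ hy.2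

lemma measure_Ico_add_measure_Ici (ν : Measure α) (hab : a ≤ b) :
    ν (Ico a b) + ν (Ici b) = ν (Ici a) := by
  rw [← Ico_union_Ici_eq_Ici hab, measure_union _ measurableSet_Ici]
  exact (Iio_disjoint_Ici le_rfl).mono_left Ico_subset_Iio_self

theorem withDensity_Ici_mul_lt_of_strictAnti [IsFiniteMeasure μ] (hρ : StrictAnti ρ)
    (hρm : AEMeasurable ρ μ) (hIco : μ (Ico a b) ≠ 0) (hIci : μ (Ici b) ≠ 0) :
    μ.withDensity ρ (Ici b) * μ (Ici a) < μ.withDensity ρ (Ici a) * μ (Ici b) := by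
  obtain ⟨x, hax, hxb⟩ : (Ico a b).Nonempty := nonempty_of_measure_ne_zero hIco
  set ν := μ.withDensity ρ
  have hν : ν (Ici b) ≤ ρ b * μ (Ici b) := withDensity_Ici_le_of_antitone hρ.antitone
  have hν_top : ν (Ici b) ≠ ∞ :=
    ne_top_of_le_ne_top (ENNReal.mul_ne_top (hρ hxb).ne_top (measure_ne_top μ _)) hν
  have h_cross : ν (Ici b) * μ (Ico a b) < ν (Ico a b) * μ (Ici b) :=
    calc ν (Ici b) * μ (Ico a b) ≤ ρ b * μ (Ici b) * μ (Ico a b) := by gcongr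
      _ = ρ b * μ (Ico a b) * μ (Ici b) := mul_right_comm _ _ _
      _ < ν (Ico a b) * μ (Ici b) :=
        ENNReal.mul_lt_mul_left hIci (measure_ne_top μ _)
          (mul_measure_Ico_lt_withDensity_Ico_of_strictAnti hρ hρm hIco (measure_ne_top μ _))
  have hab : a ≤ b := hax.trans hxb.le
  rw [← measure_Ico_add_measure_Ici μ hab, ← measure_Ico_add_measure_Ici ν hab, mul_add, add_mul]
  exact ENNReal.add_lt_add_right (ENNReal.mul_ne_top hν_top (measure_ne_top μ _)) h_cross

theorem tilted_Ici_mul_lt_of_strictAnti [IsFiniteMeasure μ] {f : α → ℝ} (hf : StrictAnti f)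
    (hint : Integrable (fun x => Real.exp (f x)) μ)
    (hIco : μ (Ico a b) ≠ 0) (hIci : μ (Ici b) ≠ 0) :
    μ.tilted f (Ici b) * μ (Ici a) < μ.tilted f (Ici a) * μ (Ici b) := by
  have : NeZero μ := ⟨fun h => hIci (by simp [h])⟩
  have hZ : 0 < ∫ x, Real.exp (f x) ∂μ := integral_exp_pos hint
  refine withDensity_Ici_mul_lt_of_strictAnti (fun x y hxy => ?_)
    (hint.aemeasurable.div_const _).ennreal_ofReal hIco hIci
  rw [ENNReal.ofReal_lt_ofReal_iff (by positivity)]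
  gcongr
  exact hf hxy

end MonotoneLikelihoodRatio

lemma complexMGF_tilted_mul {Ω : Type*} [MeasurableSpace Ω] (μ : Measure Ω) (X : Ω → ℝ) (t : ℝ)
    (z : ℂ) :
    complexMGF X (μ.tilted (t * X ·)) z = complexMGF X μ (z + t) / mgf X μ t := by
  rw [complexMGF, complexMGF, integral_tilted_mul_eq_mgf, ← integral_div]
  refine integral_congr_ae (ae_of_all _ fun ω => ?_)
  simp only [Complex.real_smul, Complex.ofReal_div, Complex.ofReal_exp, Complex.ofReal_mul, add_mul,
    Complex.exp_add]
  ring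

section Gaussian

variable {m : ℝ} {v : NNReal}

lemma gaussianReal_tilted_mul (t : ℝ) :
    (gaussianReal m v).tilted (t * ·) = gaussianReal (m + v * t) v := by
  have := isProbabilityMeasure_tilted (integrable_exp_mul_gaussianReal (μ := m) (v := v) t)
  refine Measure.ext_of_complexMGF_id_eq (funext fun z => ?_)
  have h_tilt : complexMGF id ((gaussianReal m v).tilted (t * ·)) z =
      complexMGF id (gaussianReal m v) (z + t) / mgf id (gaussianReal m v) t :=
    complexMGF_tilted_mul _ id t z
  rw [h_tilt, mgf_id_gaussianReal]
  simp only [complexMGF_id_gaussianReal, Complex.ofReal_exp, ← Complex.exp_sub]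
  congr 1
  push_cast
  ring

theorem gaussianReal_Ici_mul_lt {m' a b : ℝ} (hv : v ≠ 0) (hm : m' < m) (hab : a < b) :
    gaussianReal m' v (Set.Ici b) * gaussianReal m v (Set.Ici a) <
      gaussianReal m' v (Set.Ici a) * gaussianReal m v (Set.Ici b) := by
  have := (gaussianReal_absolutelyContinuous' m hv).isOpenPosMeasure
  have hv_pos : (0 : ℝ) < v := NNReal.coe_pos.mpr (pos_iff_ne_zero.mpr hv)
  set t := (m' - m) / v
  have hIco : 0 < gaussianReal m v (Set.Ico a b) :=
    (Measure.measure_Ioo_pos _ |>.mpr hab).trans_le (measure_mono Set.Ioo_subset_Ico_self)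
  have hIci : 0 < gaussianReal m v (Set.Ici b) :=
    (Measure.measure_Ioi_pos _ b).trans_le (measure_mono Set.Ioi_subset_Ici_self)
  have ht : t < 0 := div_neg_of_neg_of_pos (sub_neg.mpr hm) hv_pos
  have h_tilt : (gaussianReal m v).tilted (t * ·) = gaussianReal m' v := by
    rw [gaussianReal_tilted_mul, mul_div_cancel₀ _ hv_pos.ne', add_sub_cancel]
  rw [← h_tilt]
  exact tilted_Ici_mul_lt_of_strictAnti (fun _ _ hxy => mul_lt_mul_of_neg_left hxy ht)
    (integrable_exp_mul_gaussianReal t) hIco.ne' hIci.ne'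

end Gaussian

/-- Fix `r > 0`, `m ∈ ℝ`, `σ > 0`, and let `X` be a real random variable with
Gaussian distribution `N(m, σ²)`. Then `s ↦ P(X ≥ s + r | X ≥ s)` is strictly decreasing:
for all `s₁ < s₂`, `P(X ≥ s₂ + r) · P(X ≥ s₁) < P(X ≥ s₁ + r) · P(X ≥ s₂)`. -/
theorem stmt_3 {Ω : Type*} [MeasurableSpace Ω] (P : Measure Ω) [IsProbabilityMeasure P]
    (r m σ : ℝ) (hr : 0 < r) (hσ : 0 < σ) (X : Ω → ℝ) (hX : Measurable X)
    (hlaw : P.map X = gaussianReal m (Real.toNNReal (σ ^ 2)))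
    (s₁ s₂ : ℝ) (hs : s₁ < s₂) :
    P {ω | s₂ + r ≤ X ω} * P {ω | s₁ ≤ X ω} <
      P {ω | s₁ + r ≤ X ω} * P {ω | s₂ ≤ X ω} := by
  set v := Real.toNNReal (σ ^ 2)
  have hv : v ≠ 0 := (Real.toNNReal_pos.mpr (by positivity)).ne'
  have hX_law : HasLaw X (gaussianReal m v) P := ⟨hX.aemeasurable, hlaw⟩
  have h_tail (s : ℝ) : P {ω | s ≤ X ω} = gaussianReal m v (Set.Ici s) :=
    hX_law.measure_eq measurableSet_Ici
  have h_shifted_tail (s : ℝ) : P {ω | s + r ≤ X ω} = gaussianReal (m - r) v (Set.Ici s) := by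
    simp only [← le_sub_iff_add_le]
    exact (gaussianReal_sub_const hX_law r).measure_eq measurableSet_Ici
  simp only [h_shifted_tail, h_tail]
  exact gaussianReal_Ici_mul_lt hv (sub_lt_self m hr) hs
end

section
/- Let σ₁ > 0, σ₂ > 0, A ≥ 0 and x₀ ∈ ℝ, and let ν be a probability measure on ℝ such that ν((−∞, x)) ≤ A · exp(−(x − x₀)²/(2σ₂²)) for every x < x₀. Define f(x) = (1/(√(2π)·σ₁)) · ∫_ℝ exp(−(x − y)²/(2σ₁²)) dν(y), which is the density of X + N when X has law ν and N is an independent centered Gaussian with variance σ₁². Then f(x) ≤ ((A + 1)/(√(2π)·σ₁)) · exp(−(x − x₀)²/(2(σ₁ + σ₂)²)) for every x < x₀, and f(x) ≤ 1/(√(2π)·σ₁) for every x ∈ ℝ. -/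
open MeasureTheory
open scoped ENNReal

/-!
Cut the Gaussian integral at a point `z` between `x` and `x₀`: below `z` the kernel is at most `1`
and the tail of `ν` is small, above `z` the kernel is at most its value at `z`. The point dividing
`[x, x₀]` in the ratio `σ₁ : σ₂` lies `σ₁ q` above `x` and `σ₂ q` below `x₀`, where
`q = (x₀ - x) / (σ₁ + σ₂)`, so both contributions carry the same factor `exp (-q² / 2)`.
-/

theorem integral_le_mul_measureReal_add_mul_measureReal_compl {α : Type*} [MeasurableSpace α]
    {μ : Measure α} [IsFiniteMeasure μ] {f : α → ℝ} {s : Set α} {a b : ℝ} (hf : Integrable f μ)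
    (hs : MeasurableSet s) (ha : ∀ x ∈ s, f x ≤ a) (hb : ∀ x ∈ sᶜ, f x ≤ b) :
    ∫ x, f x ∂μ ≤ a * μ.real s + b * μ.real sᶜ := by
  have bound {t : Set α} {c : ℝ} (ht : MeasurableSet t) (hc : ∀ x ∈ t, f x ≤ c) :
      ∫ x in t, f x ∂μ ≤ c * μ.real t := by
    calc ∫ x in t, f x ∂μ ≤ ∫ _ in t, c ∂μ :=
          setIntegral_mono_on hf.integrableOn integrableOn_const ht hc
      _ = c * μ.real t := by rw [setIntegral_const, smul_eq_mul, mul_comm]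
  rw [← integral_add_compl hs hf]
  exact add_le_add (bound hs ha) (bound hs.compl hb)

theorem exp_neg_sq_div_le_one (t σ : ℝ) : Real.exp (-t ^ 2 / (2 * σ ^ 2)) ≤ 1 :=
  Real.exp_le_one_iff.mpr <|
    div_nonpos_of_nonpos_of_nonneg (neg_nonpos.mpr (sq_nonneg t)) (by positivity)

theorem exp_neg_mul_sq_div {σ : ℝ} (hσ : σ ≠ 0) (q : ℝ) :
    Real.exp (-(σ * q) ^ 2 / (2 * σ ^ 2)) = Real.exp (-q ^ 2 / 2) := by
  congr 1
  field_simp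

section GaussianKernel

variable (ν : Measure ℝ) [IsFiniteMeasure ν]

theorem integrable_exp_neg_sub_sq_div (x σ : ℝ) :
    Integrable (fun y ↦ Real.exp (-(x - y) ^ 2 / (2 * σ ^ 2))) ν := by
  refine .of_bound (C := 1) (by fun_prop) (.of_forall fun y ↦ ?_)
  rw [Real.norm_of_nonneg (Real.exp_nonneg _)]
  exact exp_neg_sq_div_le_one (x - y) σ

theorem integral_exp_neg_sub_sq_div_le_measureReal_univ (x σ : ℝ) :
    ∫ y, Real.exp (-(x - y) ^ 2 / (2 * σ ^ 2)) ∂ν ≤ ν.real Set.univ := by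
  calc ∫ y, Real.exp (-(x - y) ^ 2 / (2 * σ ^ 2)) ∂ν ≤ ∫ _, (1 : ℝ) ∂ν :=
        integral_mono (integrable_exp_neg_sub_sq_div ν x σ) (integrable_const 1)
          fun y ↦ exp_neg_sq_div_le_one (x - y) σ
    _ = ν.real Set.univ := by rw [integral_const, smul_eq_mul, mul_one]

theorem integral_exp_neg_sub_sq_div_le_measureReal_Iio_add {x z : ℝ} (hxz : x ≤ z) (σ : ℝ) :
    ∫ y, Real.exp (-(x - y) ^ 2 / (2 * σ ^ 2)) ∂ν
      ≤ ν.real (Set.Iio z) + Real.exp (-(z - x) ^ 2 / (2 * σ ^ 2)) * ν.real (Set.Ici z) := by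
  have kernel_le_of_ge : ∀ y ∈ (Set.Iio z)ᶜ,
      Real.exp (-(x - y) ^ 2 / (2 * σ ^ 2)) ≤ Real.exp (-(z - x) ^ 2 / (2 * σ ^ 2)) := by
    intro y hy
    have hzy : z ≤ y := not_lt.mp hy
    rw [sub_sq_comm x y]
    gcongr
  simpa only [one_mul, Set.compl_Iio] using
    integral_le_mul_measureReal_add_mul_measureReal_compl (integrable_exp_neg_sub_sq_div ν x σ)
      measurableSet_Iio (fun y _ ↦ exp_neg_sq_div_le_one (x - y) σ) kernel_le_of_ge

theorem integral_exp_neg_sub_sq_div_le_of_measureReal_Iio_le {σ₁ σ₂ A x₀ : ℝ} (hσ₁ : 0 < σ₁)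
    (hσ₂ : 0 < σ₂)
    (htail : ∀ x < x₀, ν.real (Set.Iio x) ≤ A * Real.exp (-(x - x₀) ^ 2 / (2 * σ₂ ^ 2)))
    {x : ℝ} (hx : x < x₀) :
    ∫ y, Real.exp (-(x - y) ^ 2 / (2 * σ₁ ^ 2)) ∂ν
      ≤ (A + ν.real Set.univ) * Real.exp (-(x - x₀) ^ 2 / (2 * (σ₁ + σ₂) ^ 2)) := by
  have hσ : 0 < σ₁ + σ₂ := add_pos hσ₁ hσ₂
  obtain ⟨q, hq, hx₀⟩ : ∃ q > 0, x₀ - x = (σ₁ + σ₂) * q :=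
    ⟨(x₀ - x) / (σ₁ + σ₂), div_pos (sub_pos.mpr hx) hσ, (mul_div_cancel₀ _ hσ.ne').symm⟩
  set z := x + σ₁ * q with hz
  have hxz : z - x = σ₁ * q := add_sub_cancel_left x _
  have hzx₀ : x₀ - z = σ₂ * q := by linear_combination hx₀ - hz
  have tail_le : ν.real (Set.Iio z) ≤ A * Real.exp (-q ^ 2 / 2) := by
    have h := htail z (sub_pos.mp (hzx₀ ▸ mul_pos hσ₂ hq))
    rwa [sub_sq_comm z, hzx₀, exp_neg_mul_sq_div hσ₂.ne'] at h
  have split := integral_exp_neg_sub_sq_div_le_measureReal_Iio_add ν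
    (sub_nonneg.mp (hxz ▸ (mul_pos hσ₁ hq).le)) σ₁
  rw [hxz, exp_neg_mul_sq_div hσ₁.ne'] at split
  rw [sub_sq_comm x x₀, hx₀, exp_neg_mul_sq_div hσ.ne']
  calc ∫ y, Real.exp (-(x - y) ^ 2 / (2 * σ₁ ^ 2)) ∂ν
      ≤ ν.real (Set.Iio z) + Real.exp (-q ^ 2 / 2) * ν.real (Set.Ici z) := split
    _ ≤ A * Real.exp (-q ^ 2 / 2) + Real.exp (-q ^ 2 / 2) * ν.real Set.univ := by
        gcongr
        exacts [measure_ne_top ν _, Set.subset_univ _]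
    _ = (A + ν.real Set.univ) * Real.exp (-q ^ 2 / 2) := by ring

end GaussianKernel

theorem stmt_4_general (σ₁ σ₂ A x₀ : ℝ) (hσ₁ : 0 < σ₁) (hσ₂ : 0 < σ₂) (hA : 0 ≤ A)
    (ν : Measure ℝ) [IsFiniteMeasure ν]
    (htail : ∀ x : ℝ, x < x₀ →
      ν (Set.Iio x) ≤ ENNReal.ofReal (A * Real.exp (-(x - x₀) ^ 2 / (2 * σ₂ ^ 2)))) :
    (∀ x : ℝ, x < x₀ →
      (1 / (Real.sqrt (2 * Real.pi) * σ₁)) * ∫ y, Real.exp (-(x - y) ^ 2 / (2 * σ₁ ^ 2)) ∂ν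
        ≤ ((A + ν.real Set.univ) / (Real.sqrt (2 * Real.pi) * σ₁)) *
            Real.exp (-(x - x₀) ^ 2 / (2 * (σ₁ + σ₂) ^ 2))) ∧
    ∀ x : ℝ,
      (1 / (Real.sqrt (2 * Real.pi) * σ₁)) * ∫ y, Real.exp (-(x - y) ^ 2 / (2 * σ₁ ^ 2)) ∂ν
        ≤ ν.real Set.univ / (Real.sqrt (2 * Real.pi) * σ₁) := by
  have htail_real : ∀ x < x₀,
      ν.real (Set.Iio x) ≤ A * Real.exp (-(x - x₀) ^ 2 / (2 * σ₂ ^ 2)) := fun x hx ↦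
    ENNReal.toReal_le_of_le_ofReal (by positivity) (htail x hx)
  refine ⟨fun x hx ↦ ?_, fun x ↦ ?_⟩
  · rw [one_div_mul_eq_div, div_mul_eq_mul_div]
    gcongr
    exact integral_exp_neg_sub_sq_div_le_of_measureReal_Iio_le ν hσ₁ hσ₂ htail_real hx
  · rw [one_div_mul_eq_div]
    gcongr
    exact integral_exp_neg_sub_sq_div_le_measureReal_univ ν x σ₁

/-- Let `σ₁, σ₂ > 0`, `A ≥ 0`, `x₀ ∈ ℝ`, and let `ν` be a probability measure on
`ℝ` with `ν((-∞, x)) ≤ A exp(-(x - x₀)²/(2σ₂²))` for every `x < x₀`. Let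
`f(x) = (1/(√(2π)σ₁)) ∫ exp(-(x - y)²/(2σ₁²)) dν(y)`, the density of `X + N` where `X ~ ν` and
`N` is an independent centered Gaussian of variance `σ₁²`. Then
`f(x) ≤ ((A+1)/(√(2π)σ₁)) exp(-(x - x₀)²/(2(σ₁+σ₂)²))` for `x < x₀`, and
`f(x) ≤ 1/(√(2π)σ₁)` for all `x`. -/
theorem stmt_4 (σ₁ σ₂ A x₀ : ℝ) (hσ₁ : 0 < σ₁) (hσ₂ : 0 < σ₂) (hA : 0 ≤ A)
    (ν : Measure ℝ) [IsProbabilityMeasure ν]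
    (htail : ∀ x : ℝ, x < x₀ →
      ν (Set.Iio x) ≤ ENNReal.ofReal (A * Real.exp (-(x - x₀) ^ 2 / (2 * σ₂ ^ 2)))) :
    (∀ x : ℝ, x < x₀ →
      (1 / (Real.sqrt (2 * Real.pi) * σ₁)) * ∫ y, Real.exp (-(x - y) ^ 2 / (2 * σ₁ ^ 2)) ∂ν
        ≤ ((A + 1) / (Real.sqrt (2 * Real.pi) * σ₁)) *
            Real.exp (-(x - x₀) ^ 2 / (2 * (σ₁ + σ₂) ^ 2))) ∧
    ∀ x : ℝ,
      (1 / (Real.sqrt (2 * Real.pi) * σ₁)) * ∫ y, Real.exp (-(x - y) ^ 2 / (2 * σ₁ ^ 2)) ∂ν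
        ≤ 1 / (Real.sqrt (2 * Real.pi) * σ₁) := by
  simpa only [probReal_univ] using stmt_4_general σ₁ σ₂ A x₀ hσ₁ hσ₂ hA ν htail
end

section
/- Let σ₁ > 0, σ₂ > 0, A ≥ 0 and x₀ ∈ ℝ, and let ν be a probability measure on ℝ such that ν((x, ∞)) ≤ A · exp(−(x − x₀)²/(2σ₂²)) for every x > x₀. Define f(x) = (1/(√(2π)·σ₁)) · ∫_ℝ exp(−(x − y)²/(2σ₁²)) dν(y), which is the density of X + N when X has law ν and N is an independent centered Gaussian with variance σ₁². Then f(x) ≤ ((A + 1)/(√(2π)·σ₁)) · exp(−(x − x₀)²/(2(σ₁ + σ₂)²)) for every x > x₀, and f(x) ≤ 1/(√(2π)·σ₁) for every x ∈ ℝ. -/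
open MeasureTheory
open scoped ENNReal

/-!
Split the line at the point `t` between `x₀` and `x` for which
`(t - x₀) / σ₂ = (x - t) / σ₁ = (x - x₀) / (σ₁ + σ₂)`. To the right of `t` the kernel is at most
its maximum, and the tail hypothesis at `t` bounds the mass; to the left of `t` the kernel is at
most its value at `t`. By the choice of `t` both contributions are multiples of the same quantity,
the Gaussian profile at `(x - x₀) / (σ₁ + σ₂)`.
-/

lemma lintegral_le_mul_measure_add_mul_measure_compl {α : Type*} [MeasurableSpace α]
    {μ : Measure α} {s : Set α} (hs : MeasurableSet s) {f : α → ℝ≥0∞} {a b : ℝ≥0∞}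
    (ha : ∀ y ∈ s, f y ≤ a) (hb : ∀ y ∈ sᶜ, f y ≤ b) :
    ∫⁻ y, f y ∂μ ≤ a * μ s + b * μ sᶜ := by
  rw [← lintegral_add_compl f hs, ← setLIntegral_const s a, ← setLIntegral_const sᶜ b]
  exact add_le_add (setLIntegral_mono' hs ha) (setLIntegral_mono' hs.compl hb)

theorem lintegral_comp_sub_div_le_of_tail_le {ν : Measure ℝ} {φ : ℝ → ℝ≥0∞} {M A : ℝ≥0∞}
    {σ₁ σ₂ x₀ x : ℝ} (hφ : AntitoneOn φ (Set.Ioi 0)) (hM : ∀ u, φ u ≤ M)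
    (hσ₁ : 0 < σ₁) (hσ₂ : 0 < σ₂)
    (htail : ∀ z, x₀ < z → ν (Set.Ioi z) ≤ A * φ ((z - x₀) / σ₂)) (hx : x₀ < x) :
    ∫⁻ y, φ ((x - y) / σ₁) ∂ν ≤ (M * A + ν Set.univ) * φ ((x - x₀) / (σ₁ + σ₂)) := by
  set r := (x - x₀) / (σ₁ + σ₂) with hr
  have hr_pos : 0 < r := div_pos (sub_pos.2 hx) (add_pos hσ₁ hσ₂)
  obtain ⟨t, ht₀, ht⟩ : ∃ t, (t - x₀) / σ₂ = r ∧ (x - t) / σ₁ = r :=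
    ⟨x₀ + r * σ₂, by field_simp; ring, by rw [hr]; field_simp; ring⟩
  have hx₀t : x₀ < t := sub_pos.1 <| (div_pos_iff_of_pos_right hσ₂).1 (ht₀ ▸ hr_pos)
  have left_le : ∀ y ∈ (Set.Ioi t)ᶜ, φ ((x - y) / σ₁) ≤ φ r := by
    intro y hy
    have hry : r ≤ (x - y) / σ₁ := by
      rw [← ht]
      gcongr
      exact not_lt.1 hy
    exact hφ hr_pos (hr_pos.trans_le hry) hry
  calc ∫⁻ y, φ ((x - y) / σ₁) ∂ν
      ≤ M * ν (Set.Ioi t) + φ r * ν (Set.Ioi t)ᶜ :=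
        lintegral_le_mul_measure_add_mul_measure_compl measurableSet_Ioi (fun _ _ ↦ hM _) left_le
    _ ≤ M * (A * φ r) + φ r * ν Set.univ := by
        gcongr
        · exact ht₀ ▸ htail t hx₀t
        · exact Set.subset_univ _
    _ = (M * A + ν Set.univ) * φ r := by ring

/-- The standard normal density up to normalization, scaled so that its maximum is `1`. The kernel
of standard deviation `σ` is `u ↦ gaussianProfile (u / σ)`. -/
noncomputable def gaussianProfile (u : ℝ) : ℝ := Real.exp (-u ^ 2 / 2)

lemma exp_neg_sq_div_two_mul_sq_eq_gaussianProfile (u σ : ℝ) :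
    Real.exp (-u ^ 2 / (2 * σ ^ 2)) = gaussianProfile (u / σ) := by
  rw [gaussianProfile, div_pow, ← neg_div, div_div, mul_comm]

lemma gaussianProfile_nonneg (u : ℝ) : 0 ≤ gaussianProfile u := Real.exp_nonneg _

lemma gaussianProfile_le_one (u : ℝ) : gaussianProfile u ≤ 1 :=
  Real.exp_le_one_iff.2 (by linarith [sq_nonneg u])

lemma norm_gaussianProfile (u : ℝ) : ‖gaussianProfile u‖ = gaussianProfile u :=
  Real.norm_of_nonneg (gaussianProfile_nonneg u)

lemma antitoneOn_gaussianProfile : AntitoneOn gaussianProfile (Set.Ici 0) := by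
  intro u (hu : 0 ≤ u) v _ huv
  unfold gaussianProfile
  gcongr

theorem integral_gaussianProfile_le_of_tail_le {ν : Measure ℝ} [IsFiniteMeasure ν]
    {σ₁ σ₂ A x₀ x : ℝ} (hσ₁ : 0 < σ₁) (hσ₂ : 0 < σ₂) (hA : 0 ≤ A)
    (htail : ∀ z, x₀ < z →
      ν (Set.Ioi z) ≤ ENNReal.ofReal (A * gaussianProfile ((z - x₀) / σ₂))) (hx : x₀ < x) :
    ∫ y, gaussianProfile ((x - y) / σ₁) ∂ν
      ≤ (A + ν.real Set.univ) * gaussianProfile ((x - x₀) / (σ₁ + σ₂)) := by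
  set E := gaussianProfile ((x - x₀) / (σ₁ + σ₂))
  have hAν : 0 ≤ A + ν.real Set.univ := add_nonneg hA measureReal_nonneg
  have lintegral_le : ∫⁻ y, ENNReal.ofReal (gaussianProfile ((x - y) / σ₁)) ∂ν
      ≤ ENNReal.ofReal ((A + ν.real Set.univ) * E) := by
    rw [ENNReal.ofReal_mul hAν, ENNReal.ofReal_add hA measureReal_nonneg, ofReal_measureReal,
      ← one_mul (ENNReal.ofReal A)]
    refine lintegral_comp_sub_div_le_of_tail_le (φ := fun u ↦ ENNReal.ofReal (gaussianProfile u))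
      ?_ (fun u ↦ ENNReal.ofReal_le_one.2 (gaussianProfile_le_one u)) hσ₁ hσ₂
      (fun z hz ↦ ENNReal.ofReal_mul hA ▸ htail z hz) hx
    exact ENNReal.ofReal_mono.comp_antitoneOn
      (antitoneOn_gaussianProfile.mono Set.Ioi_subset_Ici_self)
  calc ∫ y, gaussianProfile ((x - y) / σ₁) ∂ν
      ≤ (∫⁻ y, ENNReal.ofReal ‖gaussianProfile ((x - y) / σ₁)‖ ∂ν).toReal :=
        (Real.le_norm_self _).trans (norm_integral_le_lintegral_norm _)
    _ ≤ (A + ν.real Set.univ) * E := by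
        simp only [norm_gaussianProfile]
        exact ENNReal.toReal_le_of_le_ofReal
          (mul_nonneg hAν (gaussianProfile_nonneg _)) lintegral_le

lemma integral_gaussianProfile_comp_le_measureReal_univ {α : Type*} [MeasurableSpace α]
    {μ : Measure α} [IsFiniteMeasure μ] (g : α → ℝ) :
    ∫ y, gaussianProfile (g y) ∂μ ≤ μ.real Set.univ := by
  have norm_le_one (y : α) : ‖gaussianProfile (g y)‖ ≤ 1 :=
    (norm_gaussianProfile _).trans_le (gaussianProfile_le_one _)
  simpa only [one_mul] using
    (Real.le_norm_self _).trans (norm_integral_le_of_norm_le_const (.of_forall norm_le_one))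

/-- Let `σ₁, σ₂ > 0`, `A ≥ 0`, `x₀ ∈ ℝ`, and let `ν` be a probability measure on
`ℝ` with `ν((x, ∞)) ≤ A exp(-(x - x₀)²/(2σ₂²))` for every `x > x₀`. Let
`f(x) = (1/(√(2π)σ₁)) ∫ exp(-(x - y)²/(2σ₁²)) dν(y)`, the density of `X + N` where `X ~ ν` and
`N` is an independent centered Gaussian of variance `σ₁²`. Then
`f(x) ≤ ((A+1)/(√(2π)σ₁)) exp(-(x - x₀)²/(2(σ₁+σ₂)²))` for `x > x₀`, and
`f(x) ≤ 1/(√(2π)σ₁)` for all `x`. -/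
theorem stmt_5 (σ₁ σ₂ A x₀ : ℝ) (hσ₁ : 0 < σ₁) (hσ₂ : 0 < σ₂) (hA : 0 ≤ A)
    (ν : Measure ℝ) [IsProbabilityMeasure ν]
    (htail : ∀ x : ℝ, x₀ < x →
      ν (Set.Ioi x) ≤ ENNReal.ofReal (A * Real.exp (-(x - x₀) ^ 2 / (2 * σ₂ ^ 2)))) :
    (∀ x : ℝ, x₀ < x →
      (1 / (Real.sqrt (2 * Real.pi) * σ₁)) * ∫ y, Real.exp (-(x - y) ^ 2 / (2 * σ₁ ^ 2)) ∂ν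
        ≤ ((A + 1) / (Real.sqrt (2 * Real.pi) * σ₁)) *
            Real.exp (-(x - x₀) ^ 2 / (2 * (σ₁ + σ₂) ^ 2))) ∧
    ∀ x : ℝ,
      (1 / (Real.sqrt (2 * Real.pi) * σ₁)) * ∫ y, Real.exp (-(x - y) ^ 2 / (2 * σ₁ ^ 2)) ∂ν
        ≤ 1 / (Real.sqrt (2 * Real.pi) * σ₁) := by
  simp only [exp_neg_sq_div_two_mul_sq_eq_gaussianProfile] at htail ⊢
  have hc : 0 ≤ 1 / (Real.sqrt (2 * Real.pi) * σ₁) := by positivity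
  refine ⟨fun x hx ↦ ?_, fun x ↦ mul_le_of_le_one_right hc ?_⟩
  · rw [← one_div_mul_eq_div _ (A + 1), mul_assoc]
    gcongr
    simpa only [probReal_univ] using integral_gaussianProfile_le_of_tail_le hσ₁ hσ₂ hA htail hx
  · simpa only [probReal_univ] using
      integral_gaussianProfile_comp_le_measureReal_univ (μ := ν) fun y ↦ (x - y) / σ₁
end

section
/- There exists an absolute constant δ > 0 such that the following holds: for all η > 0, all σ² ≥ 11η, and all x ≥ 1.1·η^{1/2}, if Z is a real random variable with the Gaussian distribution N(0, σ²), then P(x − η^{1/2} ≤ |Z| ≤ x) ≤ (1 − δ) · P(|Z| ≤ x). -/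
open MeasureTheory ProbabilityTheory
open scoped ENNReal

/-!
The centered Gaussian density decreases with `|y|`, so its mean over the shell
`x - s ≤ |y| ≤ x` is at most its mean over the interval `|y| ≤ x`. Comparing lengths, the shell
carries at most the fraction `s / x` of the mass of the interval, which is at most `10 / 11` once
`x ≥ 1.1 s`.
-/

theorem withDensity_mul_measure_le_of_subset {α : Type*} [MeasurableSpace α] {ν : Measure α}
    {f : α → ℝ≥0∞} {s t : Set α} (hs : MeasurableSet s) (ht : MeasurableSet t) (hst : s ⊆ t)
    (hf : ∀ y ∈ s, ∀ z ∈ t \ s, f y ≤ f z) :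
    ν.withDensity f s * ν t ≤ ν s * ν.withDensity f t := by
  set c : ℝ≥0∞ := ⨆ y ∈ s, f y
  have inner_le : ν.withDensity f s ≤ c * ν s := by
    rw [withDensity_apply f hs, ← setLIntegral_const]
    exact setLIntegral_mono' hs fun y hy ↦ le_iSup₂ (f := fun y _ ↦ f y) y hy
  have le_outer : c * ν (t \ s) ≤ ν.withDensity f (t \ s) := by
    rw [withDensity_apply f (ht.diff hs), ← setLIntegral_const]
    exact setLIntegral_mono' (ht.diff hs) fun z hz ↦ iSup₂_le fun y hy ↦ hf y hy z hz
  have split (μ : Measure α) : μ t = μ s + μ (t \ s) := by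
    rw [← measure_inter_add_sdiff t hs, Set.inter_eq_self_of_subset_right hst]
  calc ν.withDensity f s * ν t
      = ν s * ν.withDensity f s + ν.withDensity f s * ν (t \ s) := by rw [split ν]; ring
    _ ≤ ν s * ν.withDensity f s + c * ν s * ν (t \ s) := by gcongr
    _ = ν s * (ν.withDensity f s + c * ν (t \ s)) := by ring
    _ ≤ ν s * (ν.withDensity f s + ν.withDensity f (t \ s)) := by gcongr
    _ = ν s * ν.withDensity f t := by rw [split (ν.withDensity f)]

theorem measurableSet_abs_le (x : ℝ) : MeasurableSet {y : ℝ | |y| ≤ x} :=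
  measurableSet_le measurable_abs measurable_const

theorem measurableSet_shell (a x : ℝ) : MeasurableSet {y : ℝ | a ≤ |y| ∧ |y| ≤ x} :=
  (measurableSet_le measurable_const measurable_abs).inter (measurableSet_abs_le x)

theorem volume_abs_le (x : ℝ) : volume {y : ℝ | |y| ≤ x} = 2 * ENNReal.ofReal x := by
  have : {y : ℝ | |y| ≤ x} = Set.Icc (-x) x := by ext; simp [abs_le]
  rw [this, Real.volume_Icc, sub_neg_eq_add, ← two_mul, ENNReal.ofReal_mul zero_le_two,
    ENNReal.ofReal_ofNat]

theorem volume_shell_le (a x : ℝ) :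
    volume {y : ℝ | a ≤ |y| ∧ |y| ≤ x} ≤ 2 * ENNReal.ofReal (x - a) := by
  have subset_union : {y : ℝ | a ≤ |y| ∧ |y| ≤ x} ⊆ Set.Icc a x ∪ Set.Icc (-x) (-a) := by
    rintro y ⟨hay, hyx⟩
    obtain ⟨hxy, hyx⟩ := abs_le.mp hyx
    exact (le_abs.mp hay).imp (⟨·, hyx⟩) (⟨hxy, le_neg_of_le_neg ·⟩)
  calc volume {y : ℝ | a ≤ |y| ∧ |y| ≤ x}
      ≤ volume (Set.Icc a x) + volume (Set.Icc (-x) (-a)) :=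
        (measure_mono subset_union).trans (measure_union_le _ _)
    _ = 2 * ENNReal.ofReal (x - a) := by
        rw [Real.volume_Icc, Real.volume_Icc, neg_sub_neg, two_mul]

theorem withDensity_shell_le {f : ℝ → ℝ≥0∞}
    (hf : ∀ y z : ℝ, |y| ≤ |z| → f z ≤ f y) {s x r : ℝ} (hx : 0 < x) (hsx : s ≤ r * x) :
    volume.withDensity f {y : ℝ | x - s ≤ |y| ∧ |y| ≤ x} ≤
      ENNReal.ofReal r * volume.withDensity f {y : ℝ | |y| ≤ x} := by
  set shell : Set ℝ := {y | x - s ≤ |y| ∧ |y| ≤ x}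
  set ball : Set ℝ := {y | |y| ≤ x} with ball_def
  have density_le : ∀ y ∈ shell, ∀ z ∈ ball \ shell, f y ≤ f z := fun y hy z hz ↦
    hf z y <| (lt_of_not_ge fun h ↦ hz.2 ⟨h, hz.1⟩).le.trans hy.1
  have volume_shell_le_ball : volume shell ≤ ENNReal.ofReal r * volume ball :=
    calc volume shell ≤ 2 * ENNReal.ofReal s := by
          simpa only [sub_sub_cancel] using volume_shell_le (x - s) x
      _ ≤ 2 * ENNReal.ofReal (r * x) := by gcongr
      _ = ENNReal.ofReal r * volume ball := by
          rw [ENNReal.ofReal_mul' hx.le, volume_abs_le, mul_left_comm]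
  have volume_ball_ne_zero : volume ball ≠ 0 := by simp [ball_def, volume_abs_le, hx]
  have volume_ball_ne_top : volume ball ≠ ∞ := by simp [ball_def, volume_abs_le, ENNReal.mul_eq_top]
  rw [← ENNReal.mul_le_mul_iff_left volume_ball_ne_zero volume_ball_ne_top]
  calc volume.withDensity f shell * volume ball
      ≤ volume shell * volume.withDensity f ball :=
        withDensity_mul_measure_le_of_subset (measurableSet_shell _ _)
          (measurableSet_abs_le x) (fun _ hy ↦ hy.2) density_le
    _ ≤ ENNReal.ofReal r * volume ball * volume.withDensity f ball := by gcongr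
    _ = ENNReal.ofReal r * volume.withDensity f ball * volume ball := mul_right_comm _ _ _

theorem gaussianPDF_le_gaussianPDF_of_abs_sub_le {m : ℝ} {v : NNReal} {y z : ℝ}
    (h : |y - m| ≤ |z - m|) : gaussianPDF m v z ≤ gaussianPDF m v y := by
  have := sq_le_sq.mpr h
  unfold gaussianPDF gaussianPDFReal
  gcongr

theorem dirac_zero_shell_le {s x r : ℝ} (hx : 0 < x) (hsx : s ≤ r * x) :
    Measure.dirac 0 {y : ℝ | x - s ≤ |y| ∧ |y| ≤ x} ≤
      ENNReal.ofReal r * Measure.dirac 0 {y : ℝ | |y| ≤ x} := by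
  rcases lt_or_ge s x with hs | hs
  · simp [hs]
  · have one_le : 1 ≤ r := le_of_mul_le_mul_right (by linarith) hx
    calc Measure.dirac 0 {y : ℝ | x - s ≤ |y| ∧ |y| ≤ x}
        ≤ Measure.dirac 0 {y : ℝ | |y| ≤ x} := measure_mono fun _ hy ↦ hy.2
      _ ≤ _ := le_mul_of_one_le_left' (ENNReal.one_le_ofReal.mpr one_le)

theorem gaussianReal_zero_shell_le (v : NNReal) {s x r : ℝ} (hx : 0 < x)
    (hsx : s ≤ r * x) :
    gaussianReal 0 v {y | x - s ≤ |y| ∧ |y| ≤ x} ≤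
      ENNReal.ofReal r * gaussianReal 0 v {y | |y| ≤ x} := by
  rcases eq_or_ne v 0 with rfl | hv
  · rw [gaussianReal_zero_var]
    exact dirac_zero_shell_le hx hsx
  · rw [gaussianReal_of_var_ne_zero 0 hv]
    exact withDensity_shell_le
      (fun y z h ↦ gaussianPDF_le_gaussianPDF_of_abs_sub_le (by simpa only [sub_zero])) hx hsx

theorem stmt_8_general {Ω : Type*} [MeasurableSpace Ω] {P : Measure Ω} {Z : Ω → ℝ} {v : NNReal}
    (hZ : HasLaw Z (gaussianReal 0 v) P) {s x r : ℝ} (hx : 0 < x) (hsx : s ≤ r * x) :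
    P {ω | x - s ≤ |Z ω| ∧ |Z ω| ≤ x} ≤ ENNReal.ofReal r * P {ω | |Z ω| ≤ x} := by
  have h := gaussianReal_zero_shell_le v hx hsx
  rwa [← hZ.map_eq, Measure.map_apply_of_aemeasurable hZ.aemeasurable (measurableSet_abs_le x),
    Measure.map_apply_of_aemeasurable hZ.aemeasurable (measurableSet_shell _ _)] at h

/-- There is an absolute constant `δ > 0` such that for all `η > 0`, all
variances `σ² ≥ 11η`, and all `x ≥ 1.1 η^{1/2}`: if `Z` has Gaussian distribution `N(0, σ²)`,
then `P(x - η^{1/2} ≤ |Z| ≤ x) ≤ (1 - δ) · P(|Z| ≤ x)`. -/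
theorem stmt_8 : ∃ δ : ℝ, 0 < δ ∧
    ∀ (η v : ℝ), 0 < η → 11 * η ≤ v →
    ∀ (Ω : Type) (_ : MeasurableSpace Ω) (P : Measure Ω), IsProbabilityMeasure P →
    ∀ (Z : Ω → ℝ), Measurable Z →
      P.map Z = gaussianReal 0 (Real.toNNReal v) →
      ∀ x : ℝ, 1.1 * Real.sqrt η ≤ x →
        P {ω | x - Real.sqrt η ≤ |Z ω| ∧ |Z ω| ≤ x} ≤
          ENNReal.ofReal (1 - δ) * P {ω | |Z ω| ≤ x} := by
  refine ⟨1 / 11, by norm_num, fun η v hη _ Ω _ P _ Z hZ hlaw x hx ↦ ?_⟩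
  have hs : 0 < √η := Real.sqrt_pos.mpr hη
  exact stmt_8_general ⟨hZ.aemeasurable, hlaw⟩ (by linarith) (by linarith)
end
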